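/- There exists an achievable Cantorval D (namely D = A(14,13,12,11,10,9,8,7; q), the achievement set of the multigeometric series with these digits and ratio q, for any q with 1/71 ≤ q < 1/25) such that D + D is also a Cantorval. -/

import Mathlib

/-!
Both sets are attractors of the same kind of iterated function system. The subset sums of
`{7, …, 14}` are exactly `{0} ∪ {7, …, 77} ∪ {84}`, so `D` is compact with `D = ⋃ q (s + D)`, `s`
running over these digits; consequently `D + D` is compact with the same equation for the digits
`{0} ∪ {7, …, 161} ∪ {168}`. It therefore suffices to treat a nonempty compact `E` with
`E = ⋃ q (s + E)`, `s ∈ {0} ∪ {7, …, M - 7} ∪ {M}`, where `1/(M - 13) ≤ q < 7/(M + 7)`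
(`SelfSim`, `SelfSim.isCantorval`).

* The upper bound on `q` says that `E ⊆ [0, 7)`. As there is no digit between `0` and `7`, the set
  `E` has gaps arbitrarily close to `0` (`SelfSim.gap_zero`).
* The lower bound on `q` says that the block `7, …, M - 7` of consecutive digits alone already
  fills an interval (`SelfSim.interval_subset`). Small copies of it accumulate at every point of
  `E`, so `E` is the closure of its interior (`SelfSim.mem_closure_interior`).
* If `b ∈ E` is the right end of a gap, then to the right of `b` the set `E` is locally contained
  in `b + E` (`SelfSim.local_right`): in each expansion of `b` the tail must vanish from some
  bounded place on. Hence there are gaps arbitrarily close to `b` on both sides, and `{b}` is a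
  component (`SelfSim.trivAt_of_left_gap`).
* To the left of the left endpoint `u` of a nontrivial component there are gaps arbitrarily close
  to `u`; their right ends are trivial components tending to `u` (`SelfSim.approx_left`). Right
  endpoints follow because the reflection of `E` is again of the same kind (`SelfSim.reflect`).
-/

open Set MeasureTheory Pointwise

/-- The achievement set (set of all subsums) of the series `∑ a n`. -/
noncomputable def achievementSet (a : ℕ → ℝ) : Set ℝ :=
  {x | ∃ I : Set ℕ, HasSum (fun i : I => a i) x}

/-- `tail a n` is the sum of the terms with index `≥ n`. -/
noncomputable def tail (a : ℕ → ℝ) (n : ℕ) : ℝ := ∑' i : ℕ, a (n + i)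

/-- The set of `k`-initial subsums: sums over subsets of the first `k` terms. -/
def Fset (a : ℕ → ℝ) (k : ℕ) : Set ℝ :=
  {x | ∃ I : Finset ℕ, I ⊆ Finset.range k ∧ x = ∑ i ∈ I, a i}

/-- The `k`-th iterate `I_k = ⋃_{f ∈ F_k} [f, f + r_k]`. -/
noncomputable def iter (a : ℕ → ℝ) (k : ℕ) : Set ℝ :=
  ⋃ f ∈ Fset a k, Set.Icc f (f + tail a k)

/-- A Cantor set: a nonempty compact perfect nowhere dense subset of `ℝ`. -/
def IsCantorSet (C : Set ℝ) : Prop :=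
  C.Nonempty ∧ IsCompact C ∧ Perfect C ∧ interior C = ∅

/-- A Cantorval: a nonempty compact set equal to the closure of its interior such that
both endpoints of every nontrivial connected component are accumulation points of
trivial (one-point) components. -/
def IsCantorval (P : Set ℝ) : Prop :=
  P.Nonempty ∧ IsCompact P ∧ P = closure (interior P) ∧
  ∀ x ∈ P, (connectedComponentIn P x).Nontrivial →
    ∀ y ∈ ({sInf (connectedComponentIn P x), sSup (connectedComponentIn P x)} : Set ℝ),
      ∀ ε > 0, ∃ z ∈ P, z ≠ y ∧ |z - y| < ε ∧ connectedComponentIn P z = {z}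

/-- The multigeometric sequence (l 0, l 1, ..., l (d-1); q): term (n-1)d + i equals
l i * q ^ n; with 0-indexing, term j equals l (j % d) * q ^ (j / d + 1). -/
noncomputable def mgSeq (l : ℕ → ℝ) (d : ℕ) (q : ℝ) (n : ℕ) : ℝ :=
  l (n % d) * q ^ (n / d + 1)

/-- The algebraic sum of k copies of D (the empty sum being {0}). -/
def sumN (D : Set ℝ) : ℕ → Set ℝ
  | 0 => {0}
  | n + 1 => sumN D n + D

/-! ### Attractors with digits `{0} ∪ {7, …, M - 7} ∪ {M}` -/

/-- The digits `{0} ∪ {7, …, M - 7} ∪ {M}`. -/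
def IsDigit (M s : ℕ) : Prop := s = 0 ∨ (7 ≤ s ∧ s + 7 ≤ M) ∨ s = M

/-- `E` is a nonempty compact solution of `E = ⋃ q (s + E)`, `s` running over the digits
`{0} ∪ {7, …, M - 7} ∪ {M}`, and `1/(M - 13) ≤ q < 7/(M + 7)`. -/
structure SelfSim (q : ℝ) (M : ℕ) (E : Set ℝ) : Prop where
  hM : 15 ≤ M
  pos : 0 < q
  lower : 1 ≤ q * ((M : ℝ) - 13)
  upper : q * ((M : ℝ) + 7) < 7
  compact : IsCompact E
  nonempty : E.Nonempty
  mem_iff : ∀ x, x ∈ E ↔ ∃ s, IsDigit M s ∧ ∃ y ∈ E, x = q * (s + y)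

/-- The complement of `P` accumulates at `z` from both sides. For `z ∈ P ⊆ ℝ` this says that `{z}`
is a component of `P`. -/
def TrivAt (P : Set ℝ) (z : ℝ) : Prop :=
  ∀ ε > 0, (∃ g, z - ε < g ∧ g < z ∧ g ∉ P) ∧ (∃ g, z < g ∧ g < z + ε ∧ g ∉ P)

namespace SelfSim

variable {q : ℝ} {M : ℕ} {E : Set ℝ}

lemma q_lt (h : SelfSim q M E) : q < 1 / 3 := by
  have h1 : (15 : ℝ) ≤ M := by exact_mod_cast h.hM
  nlinarith [h.pos, h.upper]

lemma mk_mem (h : SelfSim q M E) {s : ℕ} (hs : IsDigit M s) {y : ℝ} (hy : y ∈ E) :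
    q * (s + y) ∈ E := (h.mem_iff _).2 ⟨s, hs, y, hy, rfl⟩

lemma nonneg (h : SelfSim q M E) {x : ℝ} (hx : x ∈ E) : 0 ≤ x := by
  have hm := h.compact.sInf_mem h.nonempty
  have hb := h.compact.bddBelow
  obtain ⟨s, -, y, hy, e⟩ := (h.mem_iff _).1 hm
  have h1 := csInf_le hb hy
  have h2 := csInf_le hb hx
  have h3 : (0 : ℝ) ≤ s := s.cast_nonneg
  have := h.q_lt
  have := h.pos
  have : 0 ≤ sInf E := by
    by_contra! hc
    nlinarith
  linarith

lemma lt_seven (h : SelfSim q M E) : ∃ T < 7, ∀ x ∈ E, x ≤ T := by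
  have hm := h.compact.sSup_mem h.nonempty
  have hb := h.compact.bddAbove
  refine ⟨sSup E, ?_, fun x hx => le_csSup hb hx⟩
  obtain ⟨s, hs, y, hy, e⟩ := (h.mem_iff _).1 hm
  have h1 := le_csSup hb hy
  have h3 : (s : ℝ) ≤ M := by
    have := h.hM
    have : s ≤ M := by
      unfold IsDigit at hs
      omega
    exact_mod_cast this
  have hq := h.q_lt
  have hp := h.pos
  have hu := h.upper
  have h4 : sSup E ≤ q * (M + sSup E) := by
    calc sSup E = q * (s + y) := e
      _ ≤ _ := by gcongr
  by_contra! hc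
  nlinarith

lemma tendsto_pow (h : SelfSim q M E) (C : ℝ) :
    Filter.Tendsto (fun n : ℕ => C * q ^ n) Filter.atTop (nhds 0) := by
  simpa using (tendsto_pow_atTop_nhds_zero_of_lt_one h.pos.le
    (by linarith [h.q_lt])).const_mul C

lemma exists_pow_lt (h : SelfSim q M E) (C : ℝ) {ε : ℝ} (hε : 0 < ε) :
    ∃ n : ℕ, C * q ^ n < ε :=
  ((h.tendsto_pow C).eventually (gt_mem_nhds hε)).exists

lemma zero_mem (h : SelfSim q M E) : (0 : ℝ) ∈ E := by
  obtain ⟨x, hx⟩ := h.nonempty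
  refine h.compact.isClosed.mem_of_tendsto (h.tendsto_pow x) (Filter.Eventually.of_forall ?_)
  intro n
  induction n with
  | zero => simpa using hx
  | succ n ih =>
    have := h.mk_mem (s := 0) (Or.inl rfl) ih
    convert this using 1
    push_cast
    ring

lemma gap_zero (h : SelfSim q M E) {ε : ℝ} (hε : 0 < ε) : ∃ g, 0 < g ∧ g < ε ∧ g ∉ E := by
  obtain ⟨T, hT, hE⟩ := h.lt_seven
  have hT0 := hE 0 h.zero_mem
  have hp := h.pos
  have hq := h.q_lt
  -- The gap `(T, 7)` is reproduced at every scale `q ^ n`.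
  have key : ∀ n : ℕ, (T + 7) / 2 * q ^ n ∉ E := by
    intro n
    induction n with
    | zero =>
      intro hc
      have := hE _ hc
      linarith
    | succ n ih =>
      intro hc
      obtain ⟨s, hs, y, hy, e⟩ := (h.mem_iff _).1 hc
      have hy0 := h.nonneg hy
      have e2 : (T + 7) / 2 * q ^ n = s + y := by
        apply mul_left_cancel₀ hp.ne'
        rw [← e]
        ring
      have h1 : q ^ n ≤ 1 := pow_le_one₀ hp.le (by linarith)
      have h2 : (s : ℝ) < 7 := by nlinarith
      have h3 : s < 7 := by exact_mod_cast h2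
      have h4 : s = 0 := by
        have := h.hM
        unfold IsDigit at hs
        omega
      rw [h4] at e2
      apply ih
      rw [e2]
      simpa using hy
  obtain ⟨n, hn⟩ := h.exists_pow_lt ((T + 7) / 2) hε
  exact ⟨_, by positivity, hn, key n⟩

/-- With `t = q / (1 - q)`, the interval `[7t, (M - 7)t]` of all `∑ sₙ qⁿ` with real
`sₙ ∈ [7, M - 7]` is contained in `E`. -/
lemma interval_subset (h : SelfSim q M E) {x : ℝ} (h1 : 7 * (q / (1 - q)) ≤ x)
    (h2 : x ≤ (M - 7) * (q / (1 - q))) : x ∈ E := by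
  have hp := h.pos
  have hq := h.q_lt
  have hM := h.hM
  have hM' : (15 : ℝ) ≤ M := by exact_mod_cast h.hM
  obtain ⟨T, hT, hE⟩ := h.lt_seven
  set t := q / (1 - q) with ht
  have ht0 : 0 < t := div_pos hp (by linarith)
  have htq : t = q * (1 + t) := by
    rw [ht]
    have : 1 - q ≠ 0 := by linarith
    field_simp
    ring
  have hlen : 1 ≤ (M - 14) * t := by
    rw [ht, mul_div_assoc', le_div_iff₀ (by linarith)]
    linarith [h.lower]
  have step : ∀ x, 7 * t ≤ x → x ≤ (M - 7) * t → ∃ s, IsDigit M s ∧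
      ∃ y, 7 * t ≤ y ∧ y ≤ (M - 7) * t ∧ x = q * (s + y) := by
    intro x h1 h2
    obtain ⟨w, rfl⟩ : ∃ w, x = q * w := ⟨x / q, by field_simp⟩
    have h1' : 7 * (1 + t) ≤ w := by
      have : q * (7 * (1 + t)) ≤ q * w := by linarith
      exact le_of_mul_le_mul_left this hp
    have h2' : w ≤ (M - 7) * (1 + t) := by
      have : q * w ≤ q * ((M - 7) * (1 + t)) := by
        calc q * w ≤ (M - 7) * t := h2
          _ = (M - 7) * (q * (1 + t)) := by rw [← htq]
          _ = _ := by ring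
      exact le_of_mul_le_mul_left this hp
    have hf0 : (0 : ℝ) ≤ w - 7 * t := by linarith
    have hf1 := Nat.floor_le hf0
    have hf2 := Nat.lt_floor_add_one (w - 7 * t)
    have hf3 : 7 ≤ ⌊w - 7 * t⌋₊ := Nat.le_floor (by push_cast; linarith)
    by_cases hc : ⌊w - 7 * t⌋₊ + 7 ≤ M
    · exact ⟨_, Or.inr (Or.inl ⟨hf3, hc⟩), w - ⌊w - 7 * t⌋₊, by linarith, by linarith, by ring⟩
    · have hc' : (M : ℝ) ≤ ⌊w - 7 * t⌋₊ + 7 := by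
        have : M ≤ ⌊w - 7 * t⌋₊ + 7 := by omega
        exact_mod_cast this
      have hcast : ((M - 7 : ℕ) : ℝ) = M - 7 := by
        rw [Nat.cast_sub (by omega)]
        norm_num
      refine ⟨M - 7, Or.inr (Or.inl ⟨by omega, by omega⟩), w - (M - 7), by linarith, by linarith, ?_⟩
      rw [hcast]
      ring
  have hMT : (M - 7) * t ≤ M := by
    have : t ≤ 1 := by
      rw [ht, div_le_one (by linarith)]
      linarith
    nlinarith
  have approx : ∀ n : ℕ, ∀ x, 7 * t ≤ x → x ≤ (M - 7) * t → ∃ e ∈ E, |x - e| ≤ M * q ^ n := by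
    intro n
    induction n with
    | zero =>
      intro x h1 h2
      refine ⟨0, h.zero_mem, ?_⟩
      rw [abs_le]
      constructor <;> simp <;> linarith
    | succ n ih =>
      intro x h1 h2
      obtain ⟨s, hs, y, hy1, hy2, rfl⟩ := step x h1 h2
      obtain ⟨e, he, hye⟩ := ih y hy1 hy2
      refine ⟨_, h.mk_mem hs he, ?_⟩
      calc |q * (s + y) - q * (s + e)| = |q * (y - e)| := by ring_nf
        _ = q * |y - e| := by rw [abs_mul, abs_of_pos hp]
        _ ≤ q * (M * q ^ n) := by gcongr
        _ = _ := by ring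
  rw [← h.compact.isClosed.closure_eq, Metric.mem_closure_iff]
  intro ε hε
  obtain ⟨n, hn⟩ := h.exists_pow_lt M hε
  obtain ⟨e, he, hxe⟩ := approx n x h1 h2
  exact ⟨e, he, by rw [Real.dist_eq]; linarith⟩

lemma interior_nonempty (h : SelfSim q M E) : (interior E).Nonempty := by
  have hM' : (15 : ℝ) ≤ M := by exact_mod_cast h.hM
  have ht0 : 0 < q / (1 - q) := div_pos h.pos (by linarith [h.q_lt])
  have hlt : 7 * (q / (1 - q)) < (M - 7) * (q / (1 - q)) := by nlinarith
  obtain ⟨x, hx⟩ := nonempty_Ioo.2 hlt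
  exact ⟨x, interior_maximal (fun y hy => h.interval_subset hy.1.le hy.2.le) isOpen_Ioo hx⟩

lemma mem_closure_interior (h : SelfSim q M E) {x : ℝ} (hx : x ∈ E) :
    x ∈ closure (interior E) := by
  have hp := h.pos
  obtain ⟨T, hT, hE⟩ := h.lt_seven
  have approx : ∀ n : ℕ, ∀ x ∈ E, ∃ y ∈ interior E, |x - y| ≤ 7 * q ^ n := by
    intro n
    induction n with
    | zero =>
      intro x hx
      obtain ⟨y, hy⟩ := h.interior_nonempty
      have hy' := interior_subset hy
      have a1 := hE _ hx
      have a2 := hE _ hy'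
      have a3 := h.nonneg hx
      have a4 := h.nonneg hy'
      refine ⟨y, hy, ?_⟩
      rw [abs_le]
      constructor <;> simp <;> linarith
    | succ n ih =>
      intro x hx
      obtain ⟨s, hs, z, hz, rfl⟩ := (h.mem_iff _).1 hx
      obtain ⟨y, hy, hzy⟩ := ih z hz
      have hopen : IsOpen ((fun y : ℝ => q * (s + y)) '' interior E) :=
        ((Homeomorph.mulLeft₀ q hp.ne').isOpenMap.comp (Homeomorph.addLeft (s : ℝ)).isOpenMap) _
          isOpen_interior
      have hsub : (fun y : ℝ => q * (s + y)) '' interior E ⊆ E := by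
        rintro _ ⟨y, hy, rfl⟩
        exact h.mk_mem hs (interior_subset hy)
      refine ⟨q * (s + y), interior_maximal hsub hopen ⟨y, hy, rfl⟩, ?_⟩
      calc |q * (s + z) - q * (s + y)| = |q * (z - y)| := by ring_nf
        _ = q * |z - y| := by rw [abs_mul, abs_of_pos hp]
        _ ≤ q * (7 * q ^ n) := by gcongr
        _ = _ := by ring
  rw [Metric.mem_closure_iff]
  intro ε hε
  obtain ⟨n, hn⟩ := h.exists_pow_lt 7 hε
  obtain ⟨e, he, hxe⟩ := approx n x hx
  exact ⟨e, he, by rw [Real.dist_eq]; linarith⟩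

/-- If `b` is the right end of a gap of `E`, then every expansion of `b` is eventually zero, so that
just to the right of `b` the set `E` consists of points of `b + E`. The induction is on the scale
`q ^ n` that the length of the gap exceeds. -/
lemma local_right (h : SelfSim q M E) (n : ℕ) : ∀ b ∈ E, ∀ δ > 7 * q ^ n,
    (∀ x ∈ E, b - δ < x → b ≤ x) → ∃ ε > 0, ∀ x ∈ E, b ≤ x → x < b + ε → x - b ∈ E := by
  have hp := h.pos
  obtain ⟨T, hT, hE⟩ := h.lt_seven
  induction n with
  | zero =>
    intro b hb δ hδ hgap
    have h1 := hE b hb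
    -- A gap longer than `E` itself forces `b = 0`, since `0 ∈ E`.
    have h2 := hgap 0 h.zero_mem (by simp at hδ; linarith)
    have h3 : b = 0 := le_antisymm h2 (h.nonneg hb)
    exact ⟨1, one_pos, fun x hx _ _ => by simpa [h3] using hx⟩
  | succ n ih =>
    intro b hb δ hδ hgap
    have each : ∀ s : ℕ, IsDigit M s → ∃ ε > 0, ∀ y ∈ E, b ≤ q * (s + y) →
        q * (s + y) < b + ε → q * (s + y) - b ∈ E := by
      intro s hs
      by_cases hbs : ∃ y ∈ E, b = q * (s + y)
      · obtain ⟨y, hy, rfl⟩ := hbs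
        obtain ⟨ε, hε, H⟩ := ih y hy (δ / q)
          (by rw [gt_iff_lt, lt_div_iff₀ hp]; rw [pow_succ] at hδ; linarith) (by
            intro x hx hlt
            have h1 : q * (y - δ / q) < q * x := by gcongr
            rw [mul_sub, mul_div_cancel₀ _ hp.ne'] at h1
            have h2 := hgap _ (h.mk_mem hs hx) (by linarith)
            have h3 := le_of_mul_le_mul_left h2 hp
            linarith)
        refine ⟨q * ε, by positivity, ?_⟩
        intro z hz h1 h2
        have h3 := le_of_mul_le_mul_left h1 hp
        have h4 : q * (s + z) < q * (s + y + ε) := by linarith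
        have h5 := lt_of_mul_lt_mul_left h4 hp.le
        have h6 := h.mk_mem (s := 0) (Or.inl rfl) (H z hz (by linarith) (by linarith))
        convert h6 using 1
        push_cast
        ring
      · have hcl : IsClosed ((fun y : ℝ => q * (s + y)) '' E) :=
          (h.compact.image (by fun_prop)).isClosed
        have hnb : b ∈ ((fun y : ℝ => q * (s + y)) '' E)ᶜ := by
          rintro ⟨y, hy, e⟩
          exact hbs ⟨y, hy, e.symm⟩
        obtain ⟨ε, hε, H⟩ := Metric.isOpen_iff.1 hcl.isOpen_compl b hnb
        refine ⟨ε, hε, ?_⟩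
        intro y hy h1 h2
        exfalso
        refine H (a := q * (s + y)) ?_ ⟨y, hy, rfl⟩
        rw [Metric.mem_ball, Real.dist_eq, abs_lt]
        constructor <;> linarith
    choose! ε hε H using each
    classical
    obtain ⟨ε₀, hε₀, hmin⟩ : ∃ ε₀ > 0, ∀ s, IsDigit M s → ε₀ ≤ ε s := by
      have hne : ((Finset.range (M + 1)).filter (IsDigit M)).Nonempty :=
        ⟨0, by simp [IsDigit]⟩
      refine ⟨((Finset.range (M + 1)).filter (IsDigit M)).inf' hne ε, ?_, ?_⟩
      · rw [gt_iff_lt, Finset.lt_inf'_iff]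
        intro s hs
        exact hε s (Finset.mem_filter.1 hs).2
      · intro s hs
        apply Finset.inf'_le
        rw [Finset.mem_filter, Finset.mem_range]
        refine ⟨?_, hs⟩
        unfold IsDigit at hs
        omega
    refine ⟨ε₀, hε₀, ?_⟩
    intro x hx h1 h2
    obtain ⟨s, hs, y, hy, rfl⟩ := (h.mem_iff _).1 hx
    exact H s hs y hy h1 (by linarith [hmin s hs])

lemma trivAt_of_left_gap (h : SelfSim q M E) {b δ : ℝ} (hb : b ∈ E) (hδ : 0 < δ)
    (hgap : ∀ x ∈ E, b - δ < x → b ≤ x) : TrivAt E b := by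
  obtain ⟨n, hn⟩ := h.exists_pow_lt 7 hδ
  obtain ⟨η, hη, H⟩ := h.local_right n b hb δ hn hgap
  intro ε hε
  constructor
  · have hm := lt_min hε hδ
    have h1 := min_le_left ε δ
    have h2 := min_le_right ε δ
    refine ⟨b - min ε δ / 2, by linarith, by linarith, fun hc => ?_⟩
    have := hgap _ hc (by linarith)
    linarith
  · obtain ⟨g, hg0, hg, hgE⟩ := h.gap_zero (lt_min hε hη)
    have h1 := min_le_left ε η
    have h2 := min_le_right ε η
    refine ⟨b + g, by linarith, by linarith, fun hc => hgE ?_⟩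
    have := H _ hc (by linarith) (by linarith)
    simpa using this

lemma approx_left (h : SelfSim q M E) {u g ε : ℝ} (hu : u ∈ E) (hut : ¬ TrivAt E u)
    (hg : g ∉ E) (h1 : u - ε < g) (h2 : g < u) :
    ∃ b ∈ E, b ≠ u ∧ |b - u| < ε ∧ TrivAt E b := by
  -- `b` is the right end of the gap of `E` containing `g`.
  have hK : IsCompact (E ∩ Icc g u) := h.compact.inter_right isClosed_Icc
  have hb := hK.sInf_mem ⟨u, hu, h2.le, le_rfl⟩
  set b := sInf (E ∩ Icc g u) with hbdef
  have hgb : g < b := lt_of_le_of_ne hb.2.1 (fun e => hg (e ▸ hb.1))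
  have ht : TrivAt E b := by
    refine h.trivAt_of_left_gap (δ := b - g) hb.1 (by linarith) ?_
    intro x hx hlt
    by_contra! hc
    have := csInf_le hK.bddBelow (⟨hx, by linarith, by linarith [hb.2.2]⟩ : x ∈ E ∩ Icc g u)
    linarith
  refine ⟨b, hb.1, fun e => hut (e ▸ ht), ?_, ht⟩
  have := hb.2.2
  rw [abs_lt]
  constructor <;> linarith

/-- The digits are symmetric under `s ↦ M - s`, hence the reflection of `E` in the midpoint of
`[0, Mq / (1 - q)]` satisfies the same equation as `E`. -/
lemma reflect (h : SelfSim q M E) : SelfSim q M {x | M * (q / (1 - q)) - x ∈ E} := by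
  have hq := h.q_lt
  set c := M * (q / (1 - q)) with hc
  have hcq : c = q * (M + c) := by
    rw [hc]
    have : 1 - q ≠ 0 := by linarith
    field_simp
    ring
  refine ⟨h.hM, h.pos, h.lower, h.upper, ?_, ?_, ?_⟩
  · have : {x | c - x ∈ E} = (fun x => c - x) '' E := by
      ext x
      constructor
      · intro hx
        exact ⟨c - x, hx, by simp⟩
      · rintro ⟨y, hy, rfl⟩
        simpa using hy
    rw [this]
    exact h.compact.image (by fun_prop)
  · obtain ⟨x, hx⟩ := h.nonempty
    exact ⟨c - x, by simpa using hx⟩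
  · intro x
    have hdig : ∀ s, IsDigit M s → IsDigit M (M - s) ∧ ((M - s : ℕ) : ℝ) = M - s := by
      intro s hs
      unfold IsDigit at *
      have := h.hM
      exact ⟨by omega, Nat.cast_sub (by omega)⟩
    constructor
    · intro hx
      obtain ⟨s, hs, y, hy, e⟩ := (h.mem_iff _).1 hx
      refine ⟨M - s, (hdig s hs).1, c - y, by simpa using hy, ?_⟩
      rw [(hdig s hs).2]
      linarith
    · rintro ⟨s, hs, y, hy, e⟩
      refine (h.mem_iff _).2 ⟨M - s, (hdig s hs).1, c - y, hy, ?_⟩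
      rw [(hdig s hs).2]
      linarith

lemma trivAt_reflect {c z : ℝ} (h : TrivAt {x | c - x ∈ E} z) : TrivAt E (c - z) := by
  intro ε hε
  obtain ⟨⟨g, h1, h2, h3⟩, ⟨k, h4, h5, h6⟩⟩ := h ε hε
  exact ⟨⟨c - k, by linarith, by linarith, h6⟩, ⟨c - g, by linarith, by linarith, h3⟩⟩

lemma approx_right (h : SelfSim q M E) {u g ε : ℝ} (hu : u ∈ E) (hut : ¬ TrivAt E u)
    (hg : g ∉ E) (h1 : u < g) (h2 : g < u + ε) :
    ∃ b ∈ E, b ≠ u ∧ |b - u| < ε ∧ TrivAt E b := by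
  have h' := h.reflect
  set c := M * (q / (1 - q)) with hc
  obtain ⟨b, hb, hbu, hlt, ht⟩ := h'.approx_left (u := c - u) (g := c - g) (ε := ε)
    (by simpa using hu) (fun ht => hut (by simpa using trivAt_reflect ht))
    (by simpa using hg) (by linarith) (by linarith)
  refine ⟨c - b, hb, fun e => hbu (by linarith), ?_, trivAt_reflect ht⟩
  rw [abs_sub_comm]
  convert hlt using 2
  ring

end SelfSim

/-! ### Components of subsets of the line -/

lemma TrivAt.component {P : Set ℝ} {z : ℝ} (hz : z ∈ P) (h : TrivAt P z) :
    connectedComponentIn P z = {z} := by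
  have hsub := connectedComponentIn_subset P z
  have hmem := mem_connectedComponentIn hz
  have hord := (isPreconnected_connectedComponentIn (F := P) (x := z)).ordConnected
  refine Subset.antisymm ?_ (singleton_subset_iff.2 hmem)
  intro w hw
  rw [mem_singleton_iff]
  by_contra hne
  rcases lt_or_gt_of_ne hne with hlt | hlt
  · obtain ⟨⟨g, h1, h2, h3⟩, -⟩ := h (z - w) (by linarith)
    exact h3 (hsub (hord.out hw hmem ⟨by linarith, by linarith⟩))
  · obtain ⟨-, ⟨g, h1, h2, h3⟩⟩ := h (w - z) (by linarith)
    exact h3 (hsub (hord.out hmem hw ⟨by linarith, by linarith⟩))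

theorem SelfSim.isCantorval {q : ℝ} {M : ℕ} {E : Set ℝ} (h : SelfSim q M E) : IsCantorval E := by
  refine ⟨h.nonempty, h.compact, ?_, ?_⟩
  · refine Subset.antisymm (fun x hx => h.mem_closure_interior hx) ?_
    exact closure_minimal interior_subset h.compact.isClosed
  intro x hx hnt
  have hsub := connectedComponentIn_subset E x
  have hmem := mem_connectedComponentIn hx
  have hpre := isPreconnected_connectedComponentIn (F := E) (x := x)
  set C := connectedComponentIn E x with hC
  have hCc : closure C ⊆ C :=
    hpre.closure.subset_connectedComponentIn (subset_closure hmem)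
      (closure_minimal hsub h.compact.isClosed)
  have hcomp : IsCompact C :=
    h.compact.of_isClosed_subset (isClosed_of_closure_subset hCc) hsub
  have hcc : ∀ u ∈ C, connectedComponentIn E u = C := fun u hu =>
    (connectedComponentIn_eq hu).symm
  have hnotriv : ∀ u ∈ C, ¬ TrivAt E u := by
    intro u hu ht
    have e := ht.component (hsub hu)
    rw [hcc u hu] at e
    rw [e] at hnt
    exact not_nontrivial_singleton hnt
  have hext : ∀ u ∈ C, ∀ a b, a ≤ u → u ≤ b → Icc a b ⊆ E → Icc a b ⊆ C := by
    intro u hu a b ha hb hs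
    rw [← hcc u hu]
    exact isPreconnected_Icc.subset_connectedComponentIn ⟨ha, hb⟩ hs
  intro y hy ε hε
  suffices H : ∃ b ∈ E, b ≠ y ∧ |b - y| < ε ∧ TrivAt E b by
    obtain ⟨b, hb, h1, h2, h3⟩ := H
    exact ⟨b, hb, h1, h2, h3.component hb⟩
  rcases hy with rfl | hy
  · have hu := hcomp.sInf_mem ⟨x, hmem⟩
    set u := sInf C
    have : ∃ g, g ∈ Icc (u - ε / 2) u ∧ g ∉ E := by
      by_contra! hc
      have h1 := hext u hu (u - ε / 2) u (by linarith) le_rfl hc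
        (⟨le_rfl, by linarith⟩ : u - ε / 2 ∈ Icc (u - ε / 2) u)
      have h2 := csInf_le hcomp.bddBelow h1
      change u ≤ _ at h2
      linarith
    obtain ⟨g, hg, hgE⟩ := this
    have hgu : g ≠ u := fun e => hgE (e ▸ hsub hu)
    exact h.approx_left (hsub hu) (hnotriv u hu) hgE (by linarith [hg.1])
      (lt_of_le_of_ne hg.2 hgu)
  · rw [mem_singleton_iff] at hy
    subst hy
    have hu := hcomp.sSup_mem ⟨x, hmem⟩
    set u := sSup C
    have : ∃ g, g ∈ Icc u (u + ε / 2) ∧ g ∉ E := by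
      by_contra! hc
      have h1 := hext u hu u (u + ε / 2) le_rfl (by linarith) hc
        (⟨by linarith, le_rfl⟩ : u + ε / 2 ∈ Icc u (u + ε / 2))
      have h2 := le_csSup hcomp.bddAbove h1
      change _ ≤ u at h2
      linarith
    obtain ⟨g, hg, hgE⟩ := this
    have hgu : u ≠ g := fun e => hgE (e ▸ hsub hu)
    exact h.approx_right (hsub hu) (hnotriv u hu) hgE (lt_of_le_of_ne hg.1 hgu)
      (by linarith [hg.2])

/-! ### Achievement sets -/

/-- The subsum of `∑ a n` selected by the set `I`. -/
noncomputable def subsum (a : ℕ → ℝ) (I : Set ℕ) : ℝ := ∑' n, I.indicator a n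

lemma achievementSet_eq_range {a : ℕ → ℝ} (ha : Summable a) :
    achievementSet a = range (subsum a) := by
  ext x
  constructor
  · rintro ⟨I, hI⟩
    have := hasSum_subtype_iff_indicator.1 hI
    exact ⟨I, this.tsum_eq⟩
  · rintro ⟨I, rfl⟩
    exact ⟨I, hasSum_subtype_iff_indicator.2 (ha.indicator I).hasSum⟩

/-- The achievement set is the continuous image of the Cantor space `ℕ → Bool`. -/
lemma isCompact_achievementSet {a : ℕ → ℝ} (ha : Summable a) (h0 : ∀ n, 0 ≤ a n) :
    IsCompact (achievementSet a) := by
  have hc : Continuous (fun f : ℕ → Bool => ∑' n, (if f n then a n else 0)) := by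
    refine continuous_tsum (u := a) (fun n => ?_) ha (fun n f => ?_)
    · exact (continuous_of_discreteTopology (f := fun b : Bool => if b then a n else 0)).comp
        (continuous_apply n)
    · split_ifs
      · rw [Real.norm_of_nonneg (h0 n)]
      · simpa using h0 n
  have : achievementSet a = range (fun f : ℕ → Bool => ∑' n, (if f n then a n else 0)) := by
    classical
    rw [achievementSet_eq_range ha]
    ext x
    constructor
    · rintro ⟨I, rfl⟩
      refine ⟨fun n => decide (n ∈ I), ?_⟩
      simp [subsum, indicator_apply]
    · rintro ⟨f, rfl⟩
      refine ⟨{n | f n = true}, ?_⟩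
      simp [subsum, indicator_apply]
  rw [this]
  exact isCompact_range hc

lemma summable_mgSeq {q : ℝ} (h0 : 0 ≤ q) (h1 : q < 1) :
    Summable (mgSeq (fun i => 14 - (i : ℝ)) 8 q) := by
  have hg : Summable (fun n : ℕ => q ^ (n + 1)) :=
    (summable_nat_add_iff 1).2 (summable_geometric_of_lt_one h0 h1)
  have hf : Summable (fun i : Fin 8 => (14 : ℝ) - (i : ℕ)) := (hasSum_fintype _).summable
  have hprod := hg.mul_of_nonneg hf (fun n => by positivity) (fun i => by
    have : ((i : ℕ) : ℝ) < 8 := by exact_mod_cast i.2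
    simp only [Pi.zero_apply]
    linarith)
  rw [← (Nat.divModEquiv 8).summable_iff] at hprod
  refine hprod.congr (fun n => ?_)
  simp [mgSeq, mul_comm]

lemma mgSeq_nonneg {q : ℝ} (h0 : 0 ≤ q) (n : ℕ) : 0 ≤ mgSeq (fun i => 14 - (i : ℝ)) 8 q n := by
  have h1 : ((n % 8 : ℕ) : ℝ) < 8 := by exact_mod_cast Nat.mod_lt n (by norm_num)
  exact mul_nonneg (by linarith) (by positivity)

set_option maxRecDepth 100000 in
/-- The subset sums of `{7, …, 14}` are `0`, the numbers from `7` to `77`, and `84`. -/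
lemma isDigit_iff (s : ℕ) :
    IsDigit 84 s ↔ ∃ A ⊆ Finset.range 8, s = ∑ i ∈ A, (14 - i) := by
  have key : (Finset.range 8).powerset.image (fun A => ∑ i ∈ A, (14 - i)) =
      insert 0 (insert 84 (Finset.Icc 7 77)) := by decide
  have := congrArg (fun t => s ∈ t) key
  simp only [Finset.mem_image, Finset.mem_powerset, Finset.mem_insert, Finset.mem_Icc,
    eq_iff_iff] at this
  constructor
  · intro hs
    obtain ⟨A, hA, e⟩ := this.2 (by unfold IsDigit at hs; omega)
    exact ⟨A, hA, e.symm⟩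
  · rintro ⟨A, hA, e⟩
    have := this.1 ⟨A, hA, e.symm⟩
    unfold IsDigit
    omega

/-- Splitting off the first block of eight terms. -/
lemma subsum_split {q : ℝ} (h0 : 0 ≤ q) (h1 : q < 1) (I : Set ℕ) (A : Finset ℕ)
    (hA : A ⊆ Finset.range 8) (hAI : ∀ i < 8, i ∈ I ↔ i ∈ A) :
    subsum (mgSeq (fun i => 14 - (i : ℝ)) 8 q) I = q * ((∑ i ∈ A, (14 - i) : ℕ) +
      subsum (mgSeq (fun i => 14 - (i : ℝ)) 8 q) {n | n + 8 ∈ I}) := by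
  classical
  have hs := summable_mgSeq h0 h1
  set a := mgSeq (fun i => 14 - (i : ℝ)) 8 q with ha
  rw [subsum, ← (hs.indicator I).sum_add_tsum_nat_add 8, mul_add]
  congr 1
  · have e1 : ∑ i ∈ Finset.range 8, I.indicator a i = ∑ i ∈ A, a i := by
      rw [← Finset.inter_eq_right.2 hA, ← Finset.sum_ite_mem]
      refine Finset.sum_congr rfl fun i hi => ?_
      simp only [indicator_apply, hAI i (Finset.mem_range.1 hi)]
    rw [e1, Nat.cast_sum, Finset.mul_sum]
    refine Finset.sum_congr rfl fun i hi => ?_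
    have hi8 := Finset.mem_range.1 (hA hi)
    rw [Nat.cast_sub (by omega), ha, mgSeq, Nat.mod_eq_of_lt hi8, Nat.div_eq_of_lt hi8]
    push_cast
    ring
  · rw [subsum, ← tsum_mul_left]
    refine tsum_congr fun n => ?_
    have e2 : a (n + 8) = q * a n := by
      rw [ha, mgSeq, mgSeq, Nat.add_mod_right, Nat.add_div_right n (by norm_num)]
      ring
    simp only [indicator_apply, mem_ofPred_eq, e2]
    split_ifs <;> simp

lemma selfSim_achievementSet {q : ℝ} (h1 : 1 / 71 ≤ q) (h2 : q < 1 / 25) :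
    SelfSim q 84 (achievementSet (mgSeq (fun i => 14 - (i : ℝ)) 8 q)) := by
  classical
  have h0 : 0 ≤ q := by linarith
  have hlt : q < 1 := by linarith
  have hs := summable_mgSeq h0 hlt
  refine ⟨by norm_num, by linarith, by norm_num; linarith, by norm_num; linarith,
    isCompact_achievementSet hs (mgSeq_nonneg h0), ?_, ?_⟩
  · rw [achievementSet_eq_range hs]
    exact range_nonempty _
  intro x
  rw [achievementSet_eq_range hs]
  constructor
  · rintro ⟨I, rfl⟩
    have hA : (Finset.range 8).filter (· ∈ I) ⊆ Finset.range 8 := Finset.filter_subset _ _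
    refine ⟨_, (isDigit_iff _).2 ⟨_, hA, rfl⟩, _, ⟨{n | n + 8 ∈ I}, rfl⟩,
      subsum_split h0 hlt I _ hA ?_⟩
    intro i hi
    simp [hi]
  · rintro ⟨s, hd, _, ⟨J, rfl⟩, rfl⟩
    obtain ⟨A, hA, rfl⟩ := (isDigit_iff s).1 hd
    refine ⟨{n | n ∈ A ∨ (8 ≤ n ∧ n - 8 ∈ J)}, ?_⟩
    rw [subsum_split h0 hlt _ A hA ?_]
    · congr 3
      ext n
      have : n + 8 ∉ A := fun hc => by
        have := Finset.mem_range.1 (hA hc)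
        omega
      simp [this]
    · intro i hi
      simp only [mem_ofPred_eq]
      constructor
      · rintro (h | h)
        · exact h
        · omega
      · exact Or.inl

/-- Sums of two digits for `M = 84` are precisely the digits for `M = 168`. -/
lemma isDigit_add (s : ℕ) :
    IsDigit 168 s ↔ ∃ u v, IsDigit 84 u ∧ IsDigit 84 v ∧ s = u + v := by
  unfold IsDigit
  constructor
  · intro h
    by_cases c1 : s ≤ 77
    · exact ⟨s, 0, by omega, by omega, by omega⟩
    by_cases c2 : s ≤ 83
    · exact ⟨s - 7, 7, by omega, by omega, by omega⟩
    by_cases c3 : s ≤ 154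
    · exact ⟨s - 77, 77, by omega, by omega, by omega⟩
    · exact ⟨s - 84, 84, by omega, by omega, by omega⟩
  · rintro ⟨u, v, hu, hv, rfl⟩
    omega

lemma SelfSim.add_self {q : ℝ} {E : Set ℝ} (h : SelfSim q 84 E) (h2 : q < 1 / 25) :
    SelfSim q 168 (E + E) := by
  have hl := h.lower
  have hp := h.pos
  push_cast at hl
  refine ⟨by norm_num, hp, by push_cast; linarith, by push_cast; linarith,
    h.compact.add h.compact, h.nonempty.add h.nonempty, ?_⟩
  intro x
  constructor
  · rintro ⟨y, hy, z, hz, rfl⟩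
    obtain ⟨u, hu, y', hy', rfl⟩ := (h.mem_iff _).1 hy
    obtain ⟨v, hv, z', hz', rfl⟩ := (h.mem_iff _).1 hz
    refine ⟨u + v, (isDigit_add _).2 ⟨u, v, hu, hv, rfl⟩, y' + z', add_mem_add hy' hz', ?_⟩
    push_cast
    ring
  · rintro ⟨s, hs, _, ⟨y, hy, z, hz, rfl⟩, rfl⟩
    obtain ⟨u, v, hu, hv, rfl⟩ := (isDigit_add s).1 hs
    refine ⟨_, h.mk_mem hu hy, _, h.mk_mem hv hz, ?_⟩
    push_cast
    ring

/-- For every q with 1/71 ≤ q < 1/25, the achievement set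
D = A(14,13,12,11,10,9,8,7; q) is a Cantorval and D + D is also a Cantorval. -/
theorem stmt_8 (q : ℝ) (h1 : 1 / 71 ≤ q) (h2 : q < 1 / 25) :
    IsCantorval (achievementSet (mgSeq (fun i => 14 - (i : ℝ)) 8 q)) ∧
    IsCantorval (achievementSet (mgSeq (fun i => 14 - (i : ℝ)) 8 q) +
      achievementSet (mgSeq (fun i => 14 - (i : ℝ)) 8 q)) :=
  ⟨(selfSim_achievementSet h1 h2).isCantorval,
    ((selfSim_achievementSet h1 h2).add_self h2).isCantorval⟩
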